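/- L² Carleman estimate with weight e^{τ√|x|} (the ε → 0 endpoint of the paper's family of weights): Let n ≥ 2 and let V satisfy Assumption A1 with τ0 < 1/2. There exist τ̄ ≥ 1 and C > 0 (depending on n, V) such that for every τ ≥ τ̄ and every smooth compactly supported u : ℝ^n → ℂ with supp u ⊆ {x : |x| > 1}, setting ρ_τ(x) := ( τ|x|^{−3/2} + (τ³/2)|x|^{−5/2} )^{1/4}, one has ∫ e^{4τ(√|x|−1)} ρ_τ(x)² |u(x)|² dx + ∫ ( √|x| / (τ + √|x|) )² e^{4τ(√|x|−1)} ρ_τ(x)² |∇u(x)|² dx ≤ C ∫ e^{4τ(√|x|−1)} ρ_τ(x)^{−2} |Δu(x) + V(x)u(x)|² dx. -/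

import Mathlib

open MeasureTheory Filter
open scoped ENNReal Topology BigOperators

noncomputable section

abbrev Euc (n : ℕ) := EuclideanSpace ℝ (Fin n)

/-- The `i`-th partial derivative. -/
def pd {n : ℕ} (i : Fin n) (φ : Euc n → ℂ) (x : Euc n) : ℂ :=
  fderiv ℝ φ x (EuclideanSpace.single i 1)

/-- The Laplacian. -/
def lap {n : ℕ} (φ : Euc n → ℂ) (x : Euc n) : ℂ :=
  ∑ i : Fin n, pd i (pd i φ) x

/-- Assumption A1 on the long range potential `V`, with
`τ0 = -liminf_{|x|→∞} x·∇V(x)/(4V(x))`. -/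
def SatA1 {n : ℕ} (V : Euc n → ℝ) (τ0 : ℝ) : Prop :=
  ContDiff ℝ 2 V ∧
  (∃ M : ℝ, ∀ x : Euc n, |V x| ≤ M ∧
      Real.sqrt (1 + ‖x‖ ^ 2) * ‖fderiv ℝ V x‖ ≤ M ∧
      (1 + ‖x‖ ^ 2) * ‖iteratedFDeriv ℝ 2 V x‖ ≤ M) ∧
  (∃ c : ℝ, 0 < c ∧ ∀ᶠ x in cocompact (Euc n), c ≤ V x) ∧
  τ0 = - Filter.liminf (fun x : Euc n => fderiv ℝ V x x / (4 * V x)) (cocompact (Euc n))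

/-- The dyadic annulus `{x : 2^j ≤ |x| ≤ 2^{j+1}}`. -/
def Ann (n : ℕ) (j : ℕ) : Set (Euc n) :=
  {x : Euc n | (2 : ℝ) ^ j ≤ ‖x‖ ∧ ‖x‖ ≤ (2 : ℝ) ^ (j + 1)}

/-- The exponent `(n+1)/2`. -/
def pX (n : ℕ) : ℝ≥0∞ := ENNReal.ofReal ((n + 1 : ℝ) / 2)

/-- The weight `ρ_τ(x) = (τ|x|^{-3/2} + (τ³/2)|x|^{-5/2})^{1/4}` associated to
the Carleman weight `h(ln|x|) = 2τ(√|x| - 1)`. -/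
def rhoSqrt {n : ℕ} (τ : ℝ) (x : Euc n) : ℝ :=
  (τ * ‖x‖ ^ (-(3 : ℝ) / 2) + τ ^ 3 / 2 * ‖x‖ ^ (-(5 : ℝ) / 2)) ^ ((1 : ℝ) / 4)


/-!
Put `t = log |x|` and conjugate `|x|² (Δ + V)` by `e^{φ(t)}`, with `φ` chosen so that the
right-hand side becomes the unweighted square `(S - A)²`, where `S` and `-A` are the symmetric and
antisymmetric parts. Expanding the square, the cross term `-2 S A` is a divergence plus a quadratic
form in `(w, ∇w)` for `w = e^φ u`. This form is positive for large `τ`: in `κ = φ' + 1` the leading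
terms `4 κ² κ' w²` and `κ' (x · ∇w)²` are of size `m³ w²` and `m (x · ∇w)²` with `m = τ √|x|`, and
the potential contributes `2 κ |x|² (2 V + x · ∇V) w²`, bounded below near infinity because `τ0 <
1/2` makes `2 V + x · ∇V` uniformly positive there. The form controls only the radial derivative;
the full gradient is recovered by multiplying `S` by `m w`. The estimate is thus pointwise up to
the divergence of a compactly supported field, which integrates to `0`.
-/

/-! ### Divergence of a vector field -/

section Divergence

variable {E : Type*} [NormedAddCommGroup E] [NormedSpace ℝ E] {X Y : E → E} {x : E}

/-- The divergence of a vector field, as the trace of its derivative; like `fderiv`, it is `0` at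
points where the field is not differentiable. -/
def divergence (X : E → E) (x : E) : ℝ :=
  LinearMap.trace ℝ E (fderiv ℝ X x)

lemma divergence_add (hX : DifferentiableAt ℝ X x) (hY : DifferentiableAt ℝ Y x) :
    divergence (X + Y) x = divergence X x + divergence Y x := by
  simp only [divergence, fderiv_add hX hY, ContinuousLinearMap.toLinearMap_add, map_add]

lemma divergence_sub (hX : DifferentiableAt ℝ X x) (hY : DifferentiableAt ℝ Y x) :
    divergence (X - Y) x = divergence X x - divergence Y x := by
  simp only [divergence, fderiv_sub hX hY, ContinuousLinearMap.toLinearMap_sub, map_sub]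

lemma divergence_const_smul (c : ℝ) (hX : DifferentiableAt ℝ X x) :
    divergence (c • X) x = c * divergence X x := by
  simp only [divergence, fderiv_const_smul hX, ContinuousLinearMap.toLinearMap_smul, map_smul,
    smul_eq_mul]

lemma divergence_smul [FiniteDimensional ℝ E] {f : E → ℝ} {f' : E →L[ℝ] ℝ} (hf : HasFDerivAt f f' x)
    (hX : DifferentiableAt ℝ X x) :
    divergence (f • X) x = f x * divergence X x + f' (X x) := by
  rw [divergence, (hf.smul hX.hasFDerivAt).fderiv, divergence,
    ContinuousLinearMap.toLinearMap_add, map_add, ContinuousLinearMap.toLinearMap_smul, map_smul,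
    smul_eq_mul]
  congr 1
  exact LinearMap.trace_smulRight _ _

lemma divergence_id [FiniteDimensional ℝ E] (x : E) : divergence id x = Module.finrank ℝ E := by
  rw [divergence, fderiv_id]
  exact LinearMap.trace_id ℝ E

lemma divergence_congr (h : X =ᶠ[𝓝 x] Y) : divergence X x = divergence Y x := by
  rw [divergence, h.fderiv_eq, divergence]

end Divergence

section VectorCalculus

open scoped Gradient Laplacian InnerProductSpace

variable {E : Type*} [NormedAddCommGroup E] [InnerProductSpace ℝ E] {X : E → E} {w : E → ℝ}

lemma divergence_eq_sum {ι : Type*} [Fintype ι] (b : OrthonormalBasis ι ℝ E)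
    {x : E} (hX : DifferentiableAt ℝ X x) :
    divergence X x = ∑ i, fderiv ℝ (fun y => ⟪b i, X y⟫_ℝ) x (b i) := by
  rw [divergence, LinearMap.trace_eq_sum_inner _ b]
  refine Finset.sum_congr rfl fun i _ => ?_
  exact (congrArg (· (b i))
    ((innerSL ℝ (b i)).hasFDerivAt.comp x hX.hasFDerivAt).fderiv).symm

section Gradient

variable [FiniteDimensional ℝ E]

lemma contDiff_gradient (hw : ContDiff ℝ 2 w) : ContDiff ℝ 1 (∇ w) :=
  (InnerProductSpace.toDual ℝ E).symm.contDiff.comp (hw.fderiv_right one_add_one_eq_two.le)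

lemma inner_fderiv_gradient (hw : ContDiff ℝ 2 w) (x a b : E) :
    ⟪a, fderiv ℝ (∇ w) x b⟫_ℝ = fderiv ℝ (fderiv ℝ w) x b a := by
  have hw' : DifferentiableAt ℝ (fderiv ℝ w) x :=
    (hw.fderiv_right one_add_one_eq_two.le).differentiable one_ne_zero x
  have h : HasFDerivAt (∇ w) _ x :=
    (InnerProductSpace.toDual ℝ E).symm.toContinuousLinearEquiv.hasFDerivAt.comp x hw'.hasFDerivAt
  rw [h.fderiv, real_inner_comm]
  exact InnerProductSpace.toDual_symm_apply

lemma inner_fderiv_gradient_comm (hw : ContDiff ℝ 2 w) (x a b : E) :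
    ⟪a, fderiv ℝ (∇ w) x b⟫_ℝ = ⟪b, fderiv ℝ (∇ w) x a⟫_ℝ := by
  rw [inner_fderiv_gradient hw, inner_fderiv_gradient hw]
  exact (hw.contDiffAt.isSymmSndFDerivAt (by simp)) b a

lemma divergence_gradient (hw : ContDiff ℝ 2 w) (x : E) : divergence (∇ w) x = Δ w x := by
  rw [divergence, LinearMap.trace_eq_sum_inner _ (stdOrthonormalBasis ℝ E),
    InnerProductSpace.laplacian_eq_iteratedFDeriv_stdOrthonormalBasis]
  refine Finset.sum_congr rfl fun i _ => ?_
  rw [iteratedFDeriv_two_apply]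
  exact inner_fderiv_gradient hw x _ _

end Gradient

section Integral

variable [MeasurableSpace E] [BorelSpace E] (μ : Measure E) [μ.IsAddHaarMeasure]

lemma integrable_fderiv_apply {f : E → ℝ} (hf : ContDiff ℝ 1 f) (hc : HasCompactSupport f) (v : E) :
    Integrable (fun x => fderiv ℝ f x v) μ :=
  ((hf.continuous_fderiv one_ne_zero).clm_apply
    continuous_const).integrable_of_hasCompactSupport (hc.fderiv_apply ℝ v)

variable [FiniteDimensional ℝ E]

lemma integral_fderiv_apply_eq_zero {f : E → ℝ} (hf : ContDiff ℝ 1 f) (hc : HasCompactSupport f)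
    (v : E) : ∫ x, fderiv ℝ f x v ∂μ = 0 := by
  simpa using integral_mul_fderiv_eq_neg_fderiv_mul_of_integrable (μ := μ)
    (f := fun _ => (1 : ℝ)) (g := f) (v := v) (by simp)
    (by simpa using integrable_fderiv_apply μ hf hc v)
    (by simpa using hf.continuous.integrable_of_hasCompactSupport hc)
    (fun _ _ => by fun_prop) (fun x _ => hf.differentiable one_ne_zero x)

lemma integrable_divergence (hX : ContDiff ℝ 1 X) (hc : HasCompactSupport X) :
    Integrable (divergence X) μ := by
  rw [show divergence X = _ from funext fun x =>
    divergence_eq_sum (stdOrthonormalBasis ℝ E) (hX.differentiable one_ne_zero x)]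
  exact integrable_finsetSum _ fun i _ => integrable_fderiv_apply μ (contDiff_const.inner ℝ hX)
    (hc.comp_left (inner_zero_right _)) _

theorem integral_divergence_eq_zero (hX : ContDiff ℝ 1 X) (hc : HasCompactSupport X) :
    ∫ x, divergence X x ∂μ = 0 := by
  have hX' (v : E) : ContDiff ℝ 1 fun y => ⟪v, X y⟫_ℝ := contDiff_const.inner ℝ hX
  have hc' (v : E) : HasCompactSupport fun y => ⟪v, X y⟫_ℝ := hc.comp_left (inner_zero_right _)
  simp only [divergence_eq_sum (stdOrthonormalBasis ℝ E) (hX.differentiable one_ne_zero _)]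
  rw [integral_finsetSum _ fun i _ => integrable_fderiv_apply μ (hX' _) (hc' _) _]
  exact Finset.sum_eq_zero fun i _ => integral_fderiv_apply_eq_zero μ (hX' _) (hc' _) _

end Integral

end VectorCalculus

/-! ### Radial functions -/

section Radial

variable {E : Type*} [NormedAddCommGroup E]

/-- The radial function `x ↦ f (log ‖x‖)`. In the variable `log ‖x‖` the radial field `x · ∇` is
plain differentiation. -/
def logRadial (f : ℝ → ℝ) (x : E) : ℝ := f (Real.log ‖x‖)

variable [InnerProductSpace ℝ E] {f : ℝ → ℝ} {x : E}

lemma hasFDerivAt_logRadial (hx : x ≠ 0) {f' : ℝ} (hf : HasDerivAt f f' (Real.log ‖x‖)) :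
    HasFDerivAt (logRadial f) ((f' / ‖x‖ ^ 2) • innerSL ℝ x) x := by
  have hlog : HasFDerivAt (fun y : E => Real.log (‖y‖ ^ 2) / 2)
      ((1 / ‖x‖ ^ 2) • innerSL ℝ x) x := by
    have hsq := (hasStrictFDerivAt_norm_sq x).hasFDerivAt.log (by positivity)
    refine (hsq.mul_const (1 / 2 : ℝ)).congr_fderiv ?_ |>.congr_of_eventuallyEq ?_
    · module
    · exact .of_forall fun y => by ring
  simp only [Real.log_pow, Nat.cast_ofNat, mul_div_cancel_left₀ _ (two_ne_zero (α := ℝ))] at hlog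
  refine (hf.comp_hasFDerivAt x hlog).congr_fderiv ?_
  module

lemma hasFDerivAt_logRadial_mul_norm_sq (hx : x ≠ 0) {f' : ℝ}
    (hf : HasDerivAt f f' (Real.log ‖x‖)) :
    HasFDerivAt (fun y => logRadial f y * ‖y‖ ^ 2)
      ((f' + 2 * logRadial f x) • innerSL ℝ x) x := by
  refine ((hasFDerivAt_logRadial hx hf).mul
    (hasStrictFDerivAt_norm_sq x).hasFDerivAt).congr_fderiv ?_
  match_scalars
  field_simp
  ring

lemma contDiffAt_logRadial {n : WithTop ℕ∞} (hf : ContDiff ℝ n f) (hx : x ≠ 0) :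
    ContDiffAt ℝ n (logRadial f) x :=
  hf.contDiffAt.comp x ((contDiffAt_norm ℝ hx).log (norm_ne_zero_iff.mpr hx))

end Radial

/-! ### Flux identities -/

section Flux

open scoped Gradient Laplacian InnerProductSpace

variable {E : Type*} [NormedAddCommGroup E] [InnerProductSpace ℝ E] [FiniteDimensional ℝ E]
  {w α : E → ℝ} {a : ℝ} {x : E}

/-- The vector field of the Rellich–Pohozaev identity. -/
def rellichField (w : E → ℝ) (x : E) : E :=
  ‖∇ w x‖ ^ 2 • x - (2 * ⟪x, ∇ w x⟫_ℝ) • ∇ w x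

lemma contDiff_rellichField (hw : ContDiff ℝ 2 w) : ContDiff ℝ 1 (rellichField w) := by
  have hG := contDiff_gradient hw
  exact (hG.norm_sq ℝ |>.smul contDiff_id).sub
    ((contDiff_const.mul (contDiff_id.inner ℝ hG)).smul hG)

lemma divergence_rellichField (hw : ContDiff ℝ 2 w) :
    divergence (rellichField w) x
      = (Module.finrank ℝ E - 2) * ‖∇ w x‖ ^ 2 - 2 * ⟪x, ∇ w x⟫_ℝ * Δ w x := by
  have hG := (contDiff_gradient hw).differentiable one_ne_zero x
  have hid : DifferentiableAt ℝ (id : E → E) x := differentiableAt_id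
  have hsq := hG.hasFDerivAt.norm_sq
  have hinner := ((hasFDerivAt_id x).inner ℝ hG.hasFDerivAt).const_mul 2
  have hdiv := divergence_sub (hsq.differentiableAt.smul hid) (hinner.differentiableAt.smul hG)
  rw [divergence_smul hsq hid, divergence_smul hinner hG, divergence_id,
    divergence_gradient hw] at hdiv
  refine hdiv.trans ?_
  have hsymm := inner_fderiv_gradient_comm hw x x (∇ w x)
  simp [fderivInnerCLM_apply, hsymm]
  ring

lemma divergence_smul_rellichField (hw : ContDiff ℝ 2 w) (hα : HasFDerivAt α (a • innerSL ℝ x) x) :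
    divergence (fun y => α y • rellichField w y) x
      = a * (‖x‖ ^ 2 * ‖∇ w x‖ ^ 2 - 2 * ⟪x, ∇ w x⟫_ℝ ^ 2)
        + α x * ((Module.finrank ℝ E - 2) * ‖∇ w x‖ ^ 2 - 2 * ⟪x, ∇ w x⟫_ℝ * Δ w x) := by
  refine (divergence_smul hα
    ((contDiff_rellichField hw).differentiable one_ne_zero x)).trans ?_
  rw [divergence_rellichField hw, add_comm]
  simp only [rellichField, _root_.smul_apply, innerSL_apply_apply, smul_eq_mul,
    inner_sub_right, inner_smul_right, real_inner_self_eq_norm_sq]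
  ring

lemma divergence_smul_gradient (hw : ContDiff ℝ 2 w) (hα : HasFDerivAt α (a • innerSL ℝ x) x) :
    divergence (fun y => (α y * w y) • ∇ w y) x
      = α x * (w x * Δ w x + ‖∇ w x‖ ^ 2) + a * w x * ⟪x, ∇ w x⟫_ℝ := by
  have hw' := hw.differentiable two_ne_zero x
  have hG := (contDiff_gradient hw).differentiable one_ne_zero x
  refine (divergence_smul (hα.mul hw'.hasFDerivAt) hG).trans ?_
  have hself : fderiv ℝ w x (∇ w x) = ‖∇ w x‖ ^ 2 := by
    rw [← inner_gradient_left, real_inner_self_eq_norm_sq]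
  rw [divergence_gradient hw]
  simp [hself]
  ring

lemma divergence_mul_sq_smul_id {α' : E →L[ℝ] ℝ} (hw : DifferentiableAt ℝ w x)
    (hα : HasFDerivAt α α' x) :
    divergence (fun y => (α y * w y ^ 2) • y) x
      = (Module.finrank ℝ E * α x + α' x) * w x ^ 2 + 2 * α x * w x * ⟪x, ∇ w x⟫_ℝ := by
  refine (divergence_smul (hα.mul (hw.hasFDerivAt.pow 2)) (X := id) differentiableAt_id).trans ?_
  rw [divergence_id]
  simp
  ring

end Flux

/-! ### The conjugated operator -/

section Conjugated

open scoped Gradient Laplacian InnerProductSpace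

variable {E : Type*} [NormedAddCommGroup E] [InnerProductSpace ℝ E] [FiniteDimensional ℝ E]
  {κ m : ℝ → ℝ} {V w : E → ℝ} {x : E}

/-- The symmetric part of the conjugated operator `e^φ |x|² (Δ + V) e^{-φ}`, where `φ` is a function
of `log |x|` and `κ = φ' + 1`. -/
def conjSymm (κ : ℝ → ℝ) (V w : E → ℝ) (x : E) : ℝ :=
  ‖x‖ ^ 2 * Δ w x + 2 * ⟪x, ∇ w x⟫_ℝ
    + (logRadial κ x ^ 2 + (Module.finrank ℝ E - 1) + ‖x‖ ^ 2 * V x) * w x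

/-- Minus the antisymmetric part of the conjugated operator `e^φ |x|² (Δ + V) e^{-φ}`, where `φ` is
a function of `log |x|` and `κ = φ' + 1`. -/
def conjSkew (κ : ℝ → ℝ) (w : E → ℝ) (x : E) : ℝ :=
  2 * logRadial κ x * ⟪x, ∇ w x⟫_ℝ
    + (Module.finrank ℝ E * logRadial κ x + logRadial (deriv κ) x) * w x

/-- The vector field whose divergence separates `-2 * conjSymm * conjSkew` from the quadratic form
of the commutator of the two parts. -/
def commutatorFlux (κ : ℝ → ℝ) (V w : E → ℝ) : E → E :=
  (2 : ℝ) • ((fun y => (logRadial κ y * ‖y‖ ^ 2) • rellichField w y)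
    - (fun y => (logRadial (fun t => Module.finrank ℝ E * κ t + deriv κ t) y * ‖y‖ ^ 2 * w y)
        • ∇ w y)
    - fun y => ((logRadial (fun t => κ t ^ 3 + (Module.finrank ℝ E - 1) * κ t) y
        + logRadial κ y * ‖y‖ ^ 2 * V y) * w y ^ 2) • y)

/-- The vector field `m(log |x|) |x|² w ∇w`, used to recover `∇w` from `conjSymm`. -/
def virialFlux (m : ℝ → ℝ) (w : E → ℝ) (y : E) : E :=
  (logRadial m y * ‖y‖ ^ 2 * w y) • ∇ w y

lemma contDiffAt_virialFlux (hm : ContDiff ℝ 1 m) (hw : ContDiff ℝ 2 w) (hx : x ≠ 0) :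
    ContDiffAt ℝ 1 (virialFlux m w) x :=
  (((contDiffAt_logRadial hm hx).mul (contDiff_norm_sq ℝ).contDiffAt).mul
    (hw.of_le one_le_two).contDiffAt).smul (contDiff_gradient hw).contDiffAt

lemma divergence_virialFlux (hm : DifferentiableAt ℝ m (Real.log ‖x‖)) (hw : ContDiff ℝ 2 w)
    (hx : x ≠ 0) :
    divergence (virialFlux m w) x
      = logRadial m x * ‖x‖ ^ 2 * (w x * Δ w x + ‖∇ w x‖ ^ 2)
        + (logRadial (deriv m) x + 2 * logRadial m x) * w x * ⟪x, ∇ w x⟫_ℝ :=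
  divergence_smul_gradient hw (hasFDerivAt_logRadial_mul_norm_sq hx hm.hasDerivAt)

lemma contDiffAt_commutatorFlux (hκ : ContDiff ℝ 2 κ) (hV : ContDiff ℝ 1 V) (hw : ContDiff ℝ 2 w)
    (hx : x ≠ 0) : ContDiffAt ℝ 1 (commutatorFlux κ V w) x := by
  have hκ1 : ContDiff ℝ 1 κ := hκ.of_le one_le_two
  have hw1 : ContDiffAt ℝ 1 w x := (hw.of_le one_le_two).contDiffAt
  have hsq : ContDiffAt ℝ 1 (fun y : E => ‖y‖ ^ 2) x := (contDiff_norm_sq ℝ).contDiffAt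
  have hα := (contDiffAt_logRadial hκ1 hx).mul hsq
  have hβ := (contDiffAt_logRadial (f := fun t => Module.finrank ℝ E * κ t + deriv κ t)
    ((contDiff_const.mul hκ1).add hκ.deriv') hx).mul hsq
  have hγ := (contDiffAt_logRadial (f := fun t => κ t ^ 3 + (Module.finrank ℝ E - 1) * κ t)
    ((hκ1.pow 3).add (contDiff_const.mul hκ1)) hx).add (hα.mul hV.contDiffAt)
  exact contDiffAt_const.smul (((hα.smul (contDiff_rellichField hw).contDiffAt).sub
    ((hβ.mul hw1).smul (contDiff_gradient hw).contDiffAt)).sub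
    ((hγ.mul (hw1.pow 2)).smul contDiffAt_id))

-- The coefficients of the three fluxes are those for which `w * Δ w`, `‖∇ w‖ ^ 2` and
-- `κ ^ 3 * w * ⟪x, ∇ w⟫` cancel.
lemma sq_conjSymm_sub_conjSkew (hκ : ContDiff ℝ 2 κ) (hV : ContDiff ℝ 1 V) (hw : ContDiff ℝ 2 w)
    (hx : x ≠ 0) :
    (conjSymm κ V w x - conjSkew κ w x) ^ 2
      = conjSymm κ V w x ^ 2 + conjSkew κ w x ^ 2 + 4 * logRadial (deriv κ) x * ⟪x, ∇ w x⟫_ℝ ^ 2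
        + 2 * (Module.finrank ℝ E * logRadial (deriv κ) x + logRadial (deriv (deriv κ)) x)
          * w x * ⟪x, ∇ w x⟫_ℝ
        + (4 * logRadial κ x ^ 2 * logRadial (deriv κ) x
          + 2 * logRadial κ x * ‖x‖ ^ 2 * (2 * V x + ⟪x, ∇ V x⟫_ℝ)) * w x ^ 2
        + divergence (commutatorFlux κ V w) x := by
  have dκ := (hκ.differentiable two_ne_zero (Real.log ‖x‖)).hasDerivAt
  have dκ' := (hκ.differentiable_deriv_two (Real.log ‖x‖)).hasDerivAt
  have dw := hw.differentiable two_ne_zero x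
  have dG := (contDiff_gradient hw).differentiable one_ne_zero x
  have dR := (contDiff_rellichField hw).differentiable one_ne_zero x
  have hα := hasFDerivAt_logRadial_mul_norm_sq hx dκ
  have hβ := hasFDerivAt_logRadial_mul_norm_sq hx ((dκ.const_mul (Module.finrank ℝ E : ℝ)).add dκ')
  have hγ := (hasFDerivAt_logRadial hx ((dκ.pow 3).add
    (dκ.const_mul (Module.finrank ℝ E - 1 : ℝ)))).add
      (hα.mul (hV.differentiable one_ne_zero x).hasFDerivAt)
  have dα := hα.differentiableAt.smul dR
  have dβ := (hβ.differentiableAt.mul dw).smul dG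
  have dγ := (hγ.differentiableAt.mul (dw.pow 2)).smul differentiableAt_id
  have hdiv := divergence_const_smul 2 ((dα.sub dβ).sub dγ)
  rw [divergence_sub (dα.sub dβ) dγ, divergence_sub dα dβ] at hdiv
  have hdiv := hdiv.trans (congrArg (2 * ·) (congrArg₂ (· - ·) (congrArg₂ (· - ·)
    (divergence_smul_rellichField hw hα) (divergence_smul_gradient hw hβ))
    (divergence_mul_sq_smul_id dw hγ)))
  rw [show divergence (commutatorFlux κ V w) x = _ from hdiv]
  simp only [conjSymm, conjSkew, logRadial, inner_gradient_right, Real.ringHom_apply, Pi.add_apply,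
    Pi.pow_apply, Pi.mul_apply, Nat.cast_ofNat, Nat.add_one_sub_one, add_apply, smul_apply,
    coe_innerSL_apply, inner_self_eq_norm_sq_to_K, smul_eq_mul]
  have hr : ‖x‖ ≠ 0 := norm_ne_zero_iff.mpr hx
  field_simp
  ring

lemma mul_norm_sq_gradient_eq (hm : DifferentiableAt ℝ m (Real.log ‖x‖)) (hw : ContDiff ℝ 2 w)
    (hx : x ≠ 0) :
    logRadial m x * ‖x‖ ^ 2 * ‖∇ w x‖ ^ 2
      = -(logRadial m x * w x * conjSymm κ V w x)
        + logRadial m x * (logRadial κ x ^ 2 + (Module.finrank ℝ E - 1) + ‖x‖ ^ 2 * V x) * w x ^ 2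
        - logRadial (deriv m) x * w x * ⟪x, ∇ w x⟫_ℝ + divergence (virialFlux m w) x := by
  rw [divergence_virialFlux hm hw hx, conjSymm]
  ring

lemma commutatorFlux_eq_zero (κ : ℝ → ℝ) (V : E → ℝ) (h : w =ᶠ[𝓝 x] 0) :
    commutatorFlux κ V w x = 0 := by
  have hG : ∇ w x = 0 := by simp [gradient, h.fderiv_eq]
  simp [commutatorFlux, rellichField, hG, h.self_of_nhds]

lemma virialFlux_eq_zero (m : ℝ → ℝ) (h : w x = 0) : virialFlux m w x = 0 := by
  simp [virialFlux, h]

end Conjugated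

section Localisation

lemma contDiff_of_eventuallyEq_zero {E F : Type*} [NormedAddCommGroup E] [NormedSpace ℝ E]
    [NormedAddCommGroup F] [NormedSpace ℝ F] {X : E → F} {n : WithTop ℕ∞}
    (hX : ∀ x, x ≠ 0 → ContDiffAt ℝ n X x) (h : X =ᶠ[𝓝 0] 0) : ContDiff ℝ n X :=
  contDiff_iff_contDiffAt.mpr fun x => by
    rcases eq_or_ne x 0 with rfl | hx
    · exact contDiffAt_const.congr_of_eventuallyEq h
    · exact hX x hx

lemma hasCompactSupport_of_eventuallyEq_zero {α β γ : Type*} [TopologicalSpace α] [R1Space α]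
    [Zero β] [Zero γ] {f : α → β} {g : α → γ} (hg : HasCompactSupport g)
    (hf : ∀ x, g =ᶠ[𝓝 x] 0 → f x = 0) : HasCompactSupport f :=
  hg.mono' fun x hx => by
    contrapose! hx
    exact Function.notMem_support.mpr (hf x (notMem_tsupport_iff_eventuallyEq.mp hx))

end Localisation

section Conjugation

open scoped Gradient Laplacian InnerProductSpace

variable {E : Type*} [NormedAddCommGroup E] [InnerProductSpace ℝ E]
  {φ κ : ℝ → ℝ} {V u : E → ℝ} {x : E}

/-- The function `e^{φ(log |x|)} u(x)`. -/
def conjugate (φ : ℝ → ℝ) (u : E → ℝ) (x : E) : ℝ :=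
  logRadial (fun t => Real.exp (φ t)) x * u x

lemma contDiffAt_conjugate {n : WithTop ℕ∞} (hφ : ContDiff ℝ n φ) (hu : ContDiff ℝ n u)
    (hx : x ≠ 0) : ContDiffAt ℝ n (conjugate φ u) x :=
  (contDiffAt_logRadial hφ.exp hx).mul hu.contDiffAt

lemma contDiff_conjugate {n : WithTop ℕ∞} (hφ : ContDiff ℝ n φ) (hu : ContDiff ℝ n u)
    (h0 : u =ᶠ[𝓝 0] 0) : ContDiff ℝ n (conjugate φ u) :=
  contDiff_of_eventuallyEq_zero (fun _ hx => contDiffAt_conjugate hφ hu hx) <|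
    h0.mono fun y hy => by simp [conjugate, hy]

variable [FiniteDimensional ℝ E]

lemma gradient_conjugate {p : ℝ} (hφ : HasDerivAt φ p (Real.log ‖x‖))
    (hu : DifferentiableAt ℝ u x) (hx : x ≠ 0) :
    ∇ (conjugate φ u) x
      = Real.exp (logRadial φ x) • (∇ u x + (p * u x / ‖x‖ ^ 2) • x) := by
  refine HasGradientAt.gradient ?_
  refine ((hasFDerivAt_logRadial hx hφ.exp).mul hu.hasFDerivAt).congr_fderiv ?_
  rw [← toDual_gradient]
  ext v
  simp [logRadial]
  ring

lemma inner_gradient_conjugate {p : ℝ} (hφ : HasDerivAt φ p (Real.log ‖x‖))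
    (hu : DifferentiableAt ℝ u x) (hx : x ≠ 0) :
    ⟪x, ∇ (conjugate φ u) x⟫_ℝ
      = Real.exp (logRadial φ x) * (⟪x, ∇ u x⟫_ℝ + p * u x) := by
  have hr : ‖x‖ ≠ 0 := norm_ne_zero_iff.mpr hx
  rw [gradient_conjugate hφ hu hx, inner_smul_right, inner_add_right, inner_smul_right,
    real_inner_self_eq_norm_sq, div_mul_cancel₀ _ (pow_ne_zero 2 hr)]

-- Multiplying `∇ w` by `|y|²` turns it into a combination of fluxes with radial weights.
lemma norm_sq_mul_laplacian_conjugate (hφ : ∀ t, HasDerivAt φ (κ t - 1) t)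
    (hκ : DifferentiableAt ℝ κ (Real.log ‖x‖)) (hu : ContDiff ℝ 2 u)
    (hw : ContDiff ℝ 2 (conjugate φ u)) (hx : x ≠ 0) :
    ‖x‖ ^ 2 * Δ (conjugate φ u) x + 2 * ⟪x, ∇ (conjugate φ u) x⟫_ℝ
      = Real.exp (logRadial φ x) * (‖x‖ ^ 2 * Δ u x + 2 * logRadial κ x * ⟪x, ∇ u x⟫_ℝ
        + (Module.finrank ℝ E * (logRadial κ x - 1) + (logRadial κ x - 1) ^ 2
          + logRadial (deriv κ) x) * u x) := by
  have hr : ‖x‖ ≠ 0 := norm_ne_zero_iff.mpr hx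
  have du : Differentiable ℝ u := hu.differentiable two_ne_zero
  have dG := (contDiff_gradient hu).differentiable one_ne_zero x
  have hf := (hφ (Real.log ‖x‖)).exp
  have hα := hasFDerivAt_logRadial_mul_norm_sq hx hf
  have hβ := (hasFDerivAt_logRadial hx (hf.mul (hκ.hasDerivAt.sub_const 1))).mul (du x).hasFDerivAt
  have hflux : (fun y : E => ‖y‖ ^ 2) • ∇ (conjugate φ u) =ᶠ[𝓝 x]
      (fun y : E => logRadial (fun t => Real.exp (φ t)) y * ‖y‖ ^ 2) • ∇ u
        + (logRadial ((fun t => Real.exp (φ t)) * fun t => κ t - 1) * u) • id := by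
    filter_upwards [isOpen_ne.mem_nhds hx] with y hy
    have hy' : ‖y‖ ≠ 0 := norm_ne_zero_iff.mpr hy
    simp only [Pi.add_apply, Pi.mul_apply, Pi.smul_apply', id, gradient_conjugate (hφ _) (du y) hy,
      logRadial]
    match_scalars <;> field_simp
  have hdiv := divergence_congr hflux
  rw [divergence_add (hα.differentiableAt.smul dG) (hβ.differentiableAt.smul differentiableAt_id),
    divergence_smul hα dG, divergence_smul hβ differentiableAt_id, divergence_id,
    divergence_gradient hu, divergence_smul (hasStrictFDerivAt_norm_sq x).hasFDerivAt
      ((contDiff_gradient hw).differentiable one_ne_zero x), divergence_gradient hw] at hdiv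
  simp only [logRadial, inner_gradient_right, Real.ringHom_apply, nsmul_eq_mul,
    Nat.cast_ofNat, smul_apply, coe_innerSL_apply, smul_eq_mul, Pi.mul_apply, id_eq, add_apply,
    inner_self_eq_norm_sq_to_K] at hdiv ⊢
  field_simp at hdiv
  linear_combination hdiv

lemma conjSymm_sub_conjSkew_conjugate (hφ : ∀ t, HasDerivAt φ (κ t - 1) t)
    (hκ : DifferentiableAt ℝ κ (Real.log ‖x‖)) (hu : ContDiff ℝ 2 u)
    (hw : ContDiff ℝ 2 (conjugate φ u)) (hx : x ≠ 0) :
    conjSymm κ V (conjugate φ u) x - conjSkew κ (conjugate φ u) x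
      = Real.exp (logRadial φ x) * (‖x‖ ^ 2 * (Δ u x + V x * u x)) := by
  rw [conjSymm, conjSkew, norm_sq_mul_laplacian_conjugate hφ hκ hu hw hx,
    inner_gradient_conjugate (hφ _) (hu.differentiable two_ne_zero x) hx]
  simp only [conjugate, logRadial]
  ring

lemma norm_sq_mul_norm_sq_gradient_le {p : ℝ} (hφ : HasDerivAt φ p (Real.log ‖x‖))
    (hu : DifferentiableAt ℝ u x) (hx : x ≠ 0) :
    Real.exp (logRadial φ x) ^ 2 * (‖x‖ ^ 2 * ‖∇ u x‖ ^ 2)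
      ≤ 2 * (‖x‖ ^ 2 * ‖∇ (conjugate φ u) x‖ ^ 2) + 2 * (p * conjugate φ u x) ^ 2 := by
  have hr : ‖x‖ ≠ 0 := norm_ne_zero_iff.mpr hx
  have hsplit : (‖x‖ * Real.exp (logRadial φ x)) • ∇ u x
      = ‖x‖ • ∇ (conjugate φ u) x - (p * conjugate φ u x / ‖x‖) • x := by
    rw [gradient_conjugate hφ hu hx,
      show conjugate φ u x = Real.exp (logRadial φ x) * u x from rfl]
    match_scalars <;> field_simp
    ring
  have hpar := parallelogram_law_with_norm ℝ (‖x‖ • ∇ (conjugate φ u) x)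
    ((p * conjugate φ u x / ‖x‖) • x)
  rw [← hsplit] at hpar
  simp only [norm_smul, mul_pow, Real.norm_eq_abs, div_pow, sq_abs, div_mul_cancel₀ _
    (pow_ne_zero 2 hr)] at hpar
  linarith [sq_nonneg ‖‖x‖ • ∇ (conjugate φ u) x + (p * conjugate φ u x / ‖x‖) • x‖]

end Conjugation

/-! ### Positivity of the commutator -/

section Positivity

open scoped Gradient Laplacian InnerProductSpace

lemma neg_le_two_mul_mul_mul {a b d m B : ℝ} (hm : 0 ≤ m) (hb : |b| ≤ B * m) :
    -(m / 4 * d ^ 2 + 4 * B ^ 2 * m * a ^ 2) ≤ 2 * b * a * d := by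
  have hbad : |b| * |a * d| ≤ B * m * |a * d| := mul_le_mul_of_nonneg_right hb (abs_nonneg _)
  have hamgm : 2 * (B * m * (|a| * |d|)) ≤ m / 4 * d ^ 2 + 4 * B ^ 2 * m * a ^ 2 := by
    rw [← sq_abs a, ← sq_abs d]
    linarith [mul_nonneg hm (sq_nonneg (|d| / 2 - 2 * B * |a|))]
  rw [abs_mul a, ← mul_assoc] at hbad
  have hneg := neg_abs_le (b * a * d)
  rw [abs_mul, abs_mul] at hneg
  linarith

/-- Bounds on the slope `m` of the Carleman weight, and on `κ` and its first two derivatives, under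
which the commutator of the two parts of the conjugated operator is positive. -/
structure SlopeBounds (m κ κ' κ'' : ℝ) : Prop where
  two_le : 2 ≤ m
  sub_one_le : m - 1 ≤ κ
  le : κ ≤ m
  le_deriv : m / 4 ≤ κ'
  deriv_le : κ' ≤ m / 2
  abs_deriv_deriv_le : |κ''| ≤ m

namespace SlopeBounds

variable {m k k' k'' N : ℝ}

lemma abs_mul_add_le (h : SlopeBounds m k k' k'') (hN : 0 ≤ N) :
    |N * k' + k''| ≤ (N + 1) * m := by
  have hk' : |k'| ≤ m := abs_le.mpr
    ⟨by linarith [h.two_le, h.le_deriv], by linarith [h.two_le, h.deriv_le]⟩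
  calc |N * k' + k''| ≤ N * |k'| + |k''| := by
        simpa only [abs_mul, abs_of_nonneg hN] using abs_add_le (N * k') k''
    _ ≤ N * m + m := by gcongr; exact h.abs_deriv_deriv_le
    _ = (N + 1) * m := by ring

lemma mul_le_zeroth_order (h : SlopeBounds m k k' k'') {B K δ c r v : ℝ} (hK : 0 ≤ K) (hδ : 0 ≤ δ)
    (hm : 8 * (2 * K + 4 * B ^ 2) ≤ m ^ 2) (hc : c ≤ 1 / 8) (hcδ : c ≤ δ)
    (hv : δ * r ^ 2 - K ≤ v) :
    c * (m * r ^ 2 + m ^ 3) + 4 * B ^ 2 * m ≤ 4 * k ^ 2 * k' + 2 * k * v := by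
  have hm2 := h.two_le
  have hk : m / 2 ≤ k := by linarith [h.sub_one_le]
  have hcubic : m ^ 3 / 4 ≤ 4 * k ^ 2 * k' := by
    have hmul : (m / 2) ^ 2 * (m / 4) ≤ k ^ 2 * k' := by gcongr; exact h.le_deriv
    linarith
  have hpot : δ * (m * r ^ 2) - 2 * K * m ≤ 2 * k * v := by
    have hv' : 2 * k * (δ * r ^ 2 - K) ≤ 2 * k * v := by gcongr; linarith
    have hr : m * (δ * r ^ 2) ≤ 2 * k * (δ * r ^ 2) := by gcongr; linarith
    have hK' : k * K ≤ m * K := by gcongr; exact h.le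
    linarith
  have habsorb : 8 * (2 * K + 4 * B ^ 2) * m ≤ m ^ 2 * m := by gcongr
  have hr : c * (m * r ^ 2) ≤ δ * (m * r ^ 2) := by gcongr
  have hm3 : c * m ^ 3 ≤ 1 / 8 * m ^ 3 := by gcongr
  linarith

lemma sq_sub_one_le (h : SlopeBounds m k k' k'') : (k - 1) ^ 2 ≤ m ^ 2 :=
  sq_le_sq' (by linarith [h.two_le, h.sub_one_le]) (by linarith [h.le])

end SlopeBounds

variable {E : Type*} [NormedAddCommGroup E] [InnerProductSpace ℝ E] [FiniteDimensional ℝ E]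
  {κ m : ℝ → ℝ} {V w : E → ℝ} {x : E}

lemma coercivity_commutator {μ δ K c : ℝ} (hκ : ContDiff ℝ 2 κ) (hV : ContDiff ℝ 1 V)
    (hw : ContDiff ℝ 2 w) (hx : x ≠ 0)
    (hμ : SlopeBounds μ (logRadial κ x) (logRadial (deriv κ) x) (logRadial (deriv (deriv κ)) x))
    (hK : 0 ≤ K) (hδ : 0 ≤ δ) (hlarge : 8 * (2 * K + 4 * (Module.finrank ℝ E + 1) ^ 2) ≤ μ ^ 2)
    (hc : c ≤ 1 / 8) (hcδ : c ≤ δ)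
    (hvirial : δ * ‖x‖ ^ 2 - K ≤ ‖x‖ ^ 2 * (2 * V x + ⟪x, ∇ V x⟫_ℝ)) :
    conjSymm κ V w x ^ 2 + 3 / 4 * μ * ⟪x, ∇ w x⟫_ℝ ^ 2 + c * (μ * ‖x‖ ^ 2 + μ ^ 3) * w x ^ 2
      ≤ (conjSymm κ V w x - conjSkew κ w x) ^ 2 - divergence (commutatorFlux κ V w) x := by
  have hcross := neg_le_two_mul_mul_mul (a := w x) (d := ⟪x, ∇ w x⟫_ℝ)
    (zero_le_two.trans hμ.two_le) (hμ.abs_mul_add_le (Nat.cast_nonneg (Module.finrank ℝ E)))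
  have hzeroth := mul_le_mul_of_nonneg_right
    (hμ.mul_le_zeroth_order hK hδ hlarge hc hcδ hvirial) (sq_nonneg (w x))
  have hradial := mul_le_mul_of_nonneg_right hμ.le_deriv (sq_nonneg ⟪x, ∇ w x⟫_ℝ)
  rw [sq_conjSymm_sub_conjSkew hκ hV hw hx]
  linarith [sq_nonneg (conjSkew κ w x)]

lemma mul_potential_le {μ k v r N M : ℝ} (hμ : 2 ≤ μ) (hk : |k| ≤ μ) (hv : v ≤ M) (hM : 0 ≤ M)
    (hN : 0 ≤ N) :
    μ ^ 2 + 2 * (μ * (k ^ 2 + (N - 1) + r ^ 2 * v)) + μ / 2 + 3 * (μ * r ^ 2 + μ ^ 3)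
      ≤ (7 + 2 * N + 2 * M) * (μ * r ^ 2 + μ ^ 3) := by
  have hsq : k ^ 2 ≤ μ ^ 2 := sq_le_sq' (abs_le.mp hk).1 (abs_le.mp hk).2
  have hpot : μ * (k ^ 2 + (N - 1) + r ^ 2 * v) ≤ μ * (μ ^ 2 + N + r ^ 2 * M) := by
    gcongr
    linarith
  have hμ2 : μ ^ 2 ≤ μ ^ 3 := pow_le_pow_right₀ (by linarith) (by norm_num)
  have hμ1 : μ ≤ μ ^ 3 := le_self_pow₀ (by linarith) (by norm_num)
  have hNμ : N * μ ≤ N * μ ^ 3 := by gcongr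
  have hNr : 0 ≤ N * (μ * r ^ 2) := by positivity
  have hr : 0 ≤ μ * r ^ 2 := by positivity
  have hMμ : 0 ≤ M * μ ^ 3 := by positivity
  linarith

lemma gradient_le_conjSymm {M : ℝ} (hm : DifferentiableAt ℝ m (Real.log ‖x‖))
    (hm' : logRadial (deriv m) x = logRadial m x / 2) (hw : ContDiff ℝ 2 w) (hx : x ≠ 0)
    (hm2 : 2 ≤ logRadial m x) (hκ : |logRadial κ x| ≤ logRadial m x) (hM : 0 ≤ M) (hV : V x ≤ M) :
    2 * (logRadial m x * (‖x‖ ^ 2 * ‖∇ w x‖ ^ 2))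
        + 3 * (logRadial m x * ‖x‖ ^ 2 + logRadial m x ^ 3) * w x ^ 2
      ≤ conjSymm κ V w x ^ 2 + logRadial m x / 2 * ⟪x, ∇ w x⟫_ℝ ^ 2
        + (7 + 2 * Module.finrank ℝ E + 2 * M) * (logRadial m x * ‖x‖ ^ 2 + logRadial m x ^ 3)
          * w x ^ 2
        + 2 * divergence (virialFlux m w) x := by
  have hvirial := mul_norm_sq_gradient_eq (κ := κ) (V := V) hm hw hx
  rw [hm'] at hvirial
  have hsymm := sq_nonneg (conjSymm κ V w x + logRadial m x * w x)
  have hradial : 0 ≤ logRadial m x * (w x + ⟪x, ∇ w x⟫_ℝ) ^ 2 := by positivity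
  have hzeroth := mul_le_mul_of_nonneg_right
    (mul_potential_le (r := ‖x‖) hm2 hκ hV hM (Nat.cast_nonneg (Module.finrank ℝ E)))
    (sq_nonneg (w x))
  linarith

lemma gradient_le_divergence {δ K M c : ℝ} (hκ : ContDiff ℝ 2 κ)
    (hm : DifferentiableAt ℝ m (Real.log ‖x‖))
    (hm' : logRadial (deriv m) x = logRadial m x / 2) (hV : ContDiff ℝ 1 V)
    (hw : ContDiff ℝ 2 w) (hx : x ≠ 0)
    (hbounds : SlopeBounds (logRadial m x) (logRadial κ x) (logRadial (deriv κ) x)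
      (logRadial (deriv (deriv κ)) x))
    (hK : 0 ≤ K) (hM : 0 ≤ M)
    (hlarge : 8 * (2 * K + 4 * (Module.finrank ℝ E + 1) ^ 2) ≤ logRadial m x ^ 2)
    (hc0 : 0 < c) (hc : c ≤ 1 / 8) (hcδ : c ≤ δ) (hVM : V x ≤ M)
    (hvirial : δ * ‖x‖ ^ 2 - K ≤ ‖x‖ ^ 2 * (2 * V x + ⟪x, ∇ V x⟫_ℝ)) :
    2 * (logRadial m x * (‖x‖ ^ 2 * ‖∇ w x‖ ^ 2))
        + 3 * (logRadial m x * ‖x‖ ^ 2 + logRadial m x ^ 3) * w x ^ 2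
      ≤ (1 + (7 + 2 * Module.finrank ℝ E + 2 * M) / c)
          * ((conjSymm κ V w x - conjSkew κ w x) ^ 2 - divergence (commutatorFlux κ V w) x)
        + 2 * divergence (virialFlux m w) x := by
  have hκ' := abs_le.mpr ⟨by linarith [hbounds.two_le, hbounds.sub_one_le], hbounds.le⟩
  have hm2 := hbounds.two_le
  have hupper := gradient_le_conjSymm hm hm' hw hx hm2 hκ' hM hVM
  have hlower := coercivity_commutator hκ hV hw hx hbounds hK (hc0.le.trans hcδ) hlarge hc hcδ
    hvirial
  set L := 7 + 2 * (Module.finrank ℝ E : ℝ) + 2 * M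
  set G := (conjSymm κ V w x - conjSkew κ w x) ^ 2 - divergence (commutatorFlux κ V w) x
  have hradial : 0 ≤ logRadial m x * ⟪x, ∇ w x⟫_ℝ ^ 2 := by positivity
  have hzeroth : 0 ≤ c * (logRadial m x * ‖x‖ ^ 2 + logRadial m x ^ 3) * w x ^ 2 := by positivity
  have hG : L * (logRadial m x * ‖x‖ ^ 2 + logRadial m x ^ 3) * w x ^ 2 ≤ L / c * G :=
    calc _ = L / c * (c * (logRadial m x * ‖x‖ ^ 2 + logRadial m x ^ 3) * w x ^ 2) := by
          field_simp
      _ ≤ L / c * G := by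
          gcongr
          linarith [sq_nonneg (conjSymm κ V w x)]
  linarith

end Positivity

/-! ### The modified phase -/

section Phase

/-- The derivative `τ e^{t/2}` of the Carleman weight, as a function of `t = log |x|`. -/
def weightSlope (τ t : ℝ) : ℝ := τ * Real.exp (t / 2)

/-- The phase `φ` for which `e^{2φ} |x|⁴ = e^{4τ(√|x| - 1)} ρ_τ⁻²`, as a function of
`t = log |x|`: conjugating `|x|² (Δ + V)` by `e^φ` turns the weighted estimate into an unweighted
one. -/
def phase (τ t : ℝ) : ℝ :=
  2 * τ * (Real.exp (t / 2) - 1) - 11 / 8 * t - 1 / 4 * Real.log (τ * Real.exp t + τ ^ 3 / 2)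

/-- The function `κ = φ' + 1` of the modified phase. The sigmoid is
`e^t / (e^t + τ² / 2)`. -/
def shiftedPhaseDeriv (τ t : ℝ) : ℝ :=
  weightSlope τ t - 3 / 8 - 1 / 4 * Real.sigmoid (t - Real.log (τ ^ 2 / 2))

variable {τ : ℝ}

lemma contDiff_weightSlope (τ : ℝ) {n : WithTop ℕ∞} : ContDiff ℝ n (weightSlope τ) := by
  unfold weightSlope
  fun_prop

lemma hasDerivAt_weightSlope (τ t : ℝ) : HasDerivAt (weightSlope τ) (weightSlope τ t / 2) t :=
  ((((hasDerivAt_id t).div_const 2).exp).const_mul τ).congr_deriv (by simp [weightSlope]; ring)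

lemma contDiff_phase (hτ : 0 < τ) {n : WithTop ℕ∞} : ContDiff ℝ n (phase τ) :=
  ContDiff.sub (by fun_prop)
    (contDiff_const.mul (ContDiff.log (by fun_prop) fun t => by positivity))

lemma sigmoid_sub_log (t : ℝ) {c : ℝ} (hc : 0 < c) :
    Real.sigmoid (t - Real.log c) = Real.exp t / (Real.exp t + c) := by
  rw [Real.sigmoid_def, neg_sub, Real.exp_sub, Real.exp_log hc]
  field_simp

lemma hasDerivAt_phase (hτ : 0 < τ) (t : ℝ) :
    HasDerivAt (phase τ) (shiftedPhaseDeriv τ t - 1) t := by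
  have hpos : τ * Real.exp t + τ ^ 3 / 2 ≠ 0 := by positivity
  have hexp := ((((hasDerivAt_id t).div_const 2).exp).sub_const 1).const_mul (2 * τ)
  have hlog := ((((Real.hasDerivAt_exp t).const_mul τ).add_const (τ ^ 3 / 2)).log hpos).const_mul
    (1 / 4 : ℝ)
  refine ((hexp.sub ((hasDerivAt_id t).const_mul (11 / 8 : ℝ))).sub hlog).congr_deriv ?_
  rw [shiftedPhaseDeriv, weightSlope, sigmoid_sub_log t (by positivity), id_eq]
  field_simp
  ring

lemma contDiff_shiftedPhaseDeriv (τ : ℝ) {n : WithTop ℕ∞} :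
    ContDiff ℝ n (shiftedPhaseDeriv τ) :=
  ((contDiff_weightSlope τ).sub contDiff_const).sub
    (contDiff_const.mul ((contDiff_sigmoid.of_le le_top).comp (contDiff_id.sub contDiff_const)))

lemma deriv_shiftedPhaseDeriv (τ : ℝ) :
    deriv (shiftedPhaseDeriv τ) = fun t => weightSlope τ t / 2 - 1 / 4 *
      (Real.sigmoid (t - Real.log (τ ^ 2 / 2)) * (1 - Real.sigmoid (t - Real.log (τ ^ 2 / 2)))) :=
  funext fun t => (((hasDerivAt_weightSlope τ t).sub_const (3 / 8)).sub
    (((Real.hasDerivAt_sigmoid _).comp_sub_const t _).const_mul (1 / 4))).deriv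

lemma deriv_deriv_shiftedPhaseDeriv (τ : ℝ) :
    deriv (deriv (shiftedPhaseDeriv τ)) = fun t => weightSlope τ t / 4 - 1 / 4 *
      (Real.sigmoid (t - Real.log (τ ^ 2 / 2)) * (1 - Real.sigmoid (t - Real.log (τ ^ 2 / 2)))
        * (1 - 2 * Real.sigmoid (t - Real.log (τ ^ 2 / 2)))) := by
  rw [deriv_shiftedPhaseDeriv]
  funext t
  have hσ := (Real.hasDerivAt_sigmoid (t - Real.log (τ ^ 2 / 2))).comp_sub_const t _
  exact (((hasDerivAt_weightSlope τ t).div_const 2).sub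
    ((hσ.fun_mul (hσ.const_sub 1)).const_mul (1 / 4))).congr_deriv (by ring) |>.deriv

lemma slopeBounds_phase {t : ℝ} (h : 2 ≤ weightSlope τ t) :
    SlopeBounds (weightSlope τ t) (shiftedPhaseDeriv τ t) (deriv (shiftedPhaseDeriv τ) t)
      (deriv (deriv (shiftedPhaseDeriv τ)) t) := by
  rw [deriv_deriv_shiftedPhaseDeriv, deriv_shiftedPhaseDeriv, shiftedPhaseDeriv]
  set σ := Real.sigmoid (t - Real.log (τ ^ 2 / 2))
  have hσ0 : 0 ≤ σ := Real.sigmoid_nonneg _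
  have hσ1 : 0 ≤ 1 - σ := sub_nonneg.mpr (Real.sigmoid_le_one _)
  have hprod0 : 0 ≤ σ * (1 - σ) := mul_nonneg hσ0 hσ1
  have hprod1 : σ * (1 - σ) ≤ 1 := mul_le_one₀ (by linarith) hσ1 (by linarith)
  have hprod : |σ * (1 - σ) * (1 - 2 * σ)| ≤ 1 := by
    rw [abs_mul, abs_of_nonneg hprod0]
    exact mul_le_one₀ hprod1 (abs_nonneg _) (abs_le.mpr ⟨by linarith, by linarith⟩)
  obtain ⟨hlo, hhi⟩ := abs_le.mp hprod
  exact ⟨h, by linarith, by linarith, by linarith, by linarith,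
    abs_le.mpr ⟨by linarith, by linarith⟩⟩

end Phase

section Weight

variable {n : ℕ} {τ : ℝ} {x : Euc n}

lemma logRadial_weightSlope (τ : ℝ) (hx : x ≠ 0) : logRadial (weightSlope τ) x = τ * √‖x‖ := by
  rw [logRadial, weightSlope, Real.exp_half, Real.exp_log (norm_pos_iff.mpr hx)]

lemma rhoSqrt_sq (hτ : 0 < τ) (hx : x ≠ 0) :
    rhoSqrt τ x ^ 2
      = Real.exp (Real.log (τ * ‖x‖ + τ ^ 3 / 2) / 2 - 5 / 4 * Real.log ‖x‖) := by
  have hr : 0 < ‖x‖ := norm_pos_iff.mpr hx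
  have hfactor : τ * ‖x‖ ^ (-(3 : ℝ) / 2) + τ ^ 3 / 2 * ‖x‖ ^ (-(5 : ℝ) / 2)
      = (τ * ‖x‖ + τ ^ 3 / 2) * ‖x‖ ^ (-(5 : ℝ) / 2) := by
    rw [show -(3 : ℝ) / 2 = 1 + -(5 : ℝ) / 2 by norm_num, Real.rpow_add hr, Real.rpow_one]
    ring
  have hpos : 0 < (τ * ‖x‖ + τ ^ 3 / 2) * ‖x‖ ^ (-(5 : ℝ) / 2) := by positivity
  rw [rhoSqrt, hfactor, Real.rpow_def_of_pos hpos, ← Real.exp_nat_mul,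
    Real.log_mul (by positivity) (by positivity), Real.log_rpow hr]
  congr 1
  push_cast
  ring

lemma exp_phase_sq_mul_norm_pow_four (hτ : 0 < τ) (hx : x ≠ 0) :
    Real.exp (logRadial (phase τ) x) ^ 2 * ‖x‖ ^ 4
      = Real.exp (4 * τ * (√‖x‖ - 1)) * (rhoSqrt τ x ^ 2)⁻¹ := by
  have hr : 0 < ‖x‖ := norm_pos_iff.mpr hx
  have hpow : ‖x‖ ^ 4 = Real.exp (4 * Real.log ‖x‖) := by
    rw [← Real.exp_log (pow_pos hr 4), Real.log_pow, Nat.cast_ofNat]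
  rw [rhoSqrt_sq hτ hx, hpow, logRadial, phase, Real.exp_half, Real.exp_log hr,
    ← Real.exp_nat_mul, ← Real.exp_neg, ← Real.exp_add, ← Real.exp_add]
  congr 1
  push_cast
  ring

lemma exp_phase_sq_mul_weightSlope (hτ : 0 < τ) (hx : x ≠ 0) :
    Real.exp (logRadial (phase τ) x) ^ 2
        * (logRadial (weightSlope τ) x * ‖x‖ ^ 2 + logRadial (weightSlope τ) x ^ 3 / 2)
      = Real.exp (4 * τ * (√‖x‖ - 1)) * rhoSqrt τ x ^ 2 := by
  have hr : 0 < ‖x‖ := norm_pos_iff.mpr hx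
  have hlog : 0 < τ * ‖x‖ + τ ^ 3 / 2 := by positivity
  have hcube : √‖x‖ ^ 3 = Real.exp (3 / 2 * Real.log ‖x‖) := by
    rw [← Real.exp_log (Real.sqrt_pos.mpr hr), Real.log_sqrt hr.le, ← Real.exp_nat_mul]
    congr 1
    push_cast
    ring
  have hfactor : τ * √‖x‖ * ‖x‖ ^ 2 + (τ * √‖x‖) ^ 3 / 2
      = Real.exp (3 / 2 * Real.log ‖x‖ + Real.log (τ * ‖x‖ + τ ^ 3 / 2)) := by
    rw [Real.exp_add, Real.exp_log hlog, ← hcube]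
    linear_combination (-τ * √‖x‖ * ‖x‖) * Real.sq_sqrt hr.le
  rw [logRadial_weightSlope τ hx, hfactor, rhoSqrt_sq hτ hx, logRadial, phase, Real.exp_half,
    Real.exp_log hr, ← Real.exp_nat_mul, ← Real.exp_add, ← Real.exp_add]
  congr 1
  push_cast
  ring

lemma gradient_weight_le {s : ℝ} (hτ : 0 < τ) (hs : 0 < s) :
    (s / (τ + s)) ^ 2 * (τ * s * (s ^ 2) ^ 2 + (τ * s) ^ 3 / 2) ≤ τ * s * (s ^ 2) ^ 2 := by
  rw [div_pow, div_mul_eq_mul_div, div_le_iff₀ (by positivity), ← sub_nonneg]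
  calc 0 ≤ τ ^ 3 * s ^ 5 / 2 + 2 * τ ^ 2 * s ^ 6 := by positivity
    _ = _ := by ring

end Weight

/-! ### The potential -/

section Potential

variable {n : ℕ} {V : Euc n → ℝ}

lemma exists_le_norm_sq_mul {E : Type*} [NormedAddCommGroup E] [ProperSpace E] {f : E → ℝ} {δ : ℝ}
    (hf : Continuous f) (h : ∀ᶠ x in cocompact E, δ ≤ f x) :
    ∃ K : ℝ, 0 ≤ K ∧ ∀ x, δ * ‖x‖ ^ 2 - K ≤ ‖x‖ ^ 2 * f x := by
  have hev : ∀ᶠ x in cocompact E, (0 : ℝ) ≤ ‖x‖ ^ 2 * (f x - δ) := by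
    filter_upwards [h] with x hx
    exact mul_nonneg (sq_nonneg _) (sub_nonneg.mpr hx)
  obtain ⟨x₀, hx₀⟩ := Continuous.exists_forall_le' (f := fun x => min 0 (‖x‖ ^ 2 * (f x - δ)))
    (by fun_prop) 0 (by simpa using hev)
  refine ⟨-min 0 (‖x₀‖ ^ 2 * (f x₀ - δ)), neg_nonneg.mpr (min_le_left _ _), fun x => ?_⟩
  linarith [hx₀ x, min_le_right 0 (‖x‖ ^ 2 * (f x - δ))]

lemma SatA1.abs_fderiv_apply_self_le {τ0 : ℝ} (hV : SatA1 V τ0) :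
    ∃ M, ∀ x, |fderiv ℝ V x x| ≤ M := by
  obtain ⟨-, ⟨M, hM⟩, -⟩ := hV
  refine ⟨M, fun x => ?_⟩
  calc |fderiv ℝ V x x| ≤ ‖fderiv ℝ V x‖ * ‖x‖ := (fderiv ℝ V x).le_opNorm x
    _ ≤ ‖fderiv ℝ V x‖ * √(1 + ‖x‖ ^ 2) := by
        gcongr
        exact Real.le_sqrt_of_sq_le (by linarith)
    _ = √(1 + ‖x‖ ^ 2) * ‖fderiv ℝ V x‖ := mul_comm _ _
    _ ≤ M := (hM x).2.1

lemma SatA1.eventually_le_virial {τ0 : ℝ} (hV : SatA1 V τ0) (hτ0 : τ0 < 1 / 2) :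
    ∃ δ, 0 < δ ∧ ∀ᶠ x in cocompact (Euc n), δ ≤ 2 * V x + fderiv ℝ V x x := by
  obtain ⟨M, hM⟩ := hV.abs_fderiv_apply_self_le
  obtain ⟨-, -, ⟨c, hc, hcV⟩, hlim⟩ := hV
  obtain ⟨a, ha, ha'⟩ := exists_between (show -(1 / 2 : ℝ) <
    liminf (fun x : Euc n => fderiv ℝ V x x / (4 * V x)) (cocompact (Euc n)) by linarith)
  have hbdd : IsBoundedUnder (· ≥ ·) (cocompact (Euc n))
      (fun x : Euc n => fderiv ℝ V x x / (4 * V x)) := by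
    refine isBoundedUnder_of_eventually_ge (a := -(M / (4 * c))) ?_
    filter_upwards [hcV] with x hx
    refine (abs_le.mp ?_).1
    rw [abs_div, abs_of_pos (by linarith : 0 < 4 * V x)]
    gcongr
    · exact (abs_nonneg _).trans (hM x)
    · exact hM x
  refine ⟨(2 + 4 * a) * c, mul_pos (by linarith) hc, ?_⟩
  filter_upwards [eventually_lt_of_lt_liminf ha' hbdd, hcV] with x hx hx'
  rw [lt_div_iff₀ (by linarith)] at hx
  linarith [mul_le_mul_of_nonneg_left hx' (by linarith : 0 ≤ 2 + 4 * a)]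

end Potential

/-! ### The pointwise estimate -/

section Pointwise

open scoped Gradient Laplacian InnerProductSpace

variable {n : ℕ} {V u : Euc n → ℝ} {τ : ℝ} {x : Euc n}

lemma weighted_sq_add_gradient_le (hu : DifferentiableAt ℝ u x) (hx : x ≠ 0) (hτ : 0 < τ)
    (hm : 2 ≤ logRadial (weightSlope τ) x) :
    Real.exp (4 * τ * (√‖x‖ - 1)) * rhoSqrt τ x ^ 2 * u x ^ 2
        + (√‖x‖ / (τ + √‖x‖)) ^ 2 * Real.exp (4 * τ * (√‖x‖ - 1)) * rhoSqrt τ x ^ 2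
          * ‖∇ u x‖ ^ 2
      ≤ 2 * (logRadial (weightSlope τ) x * (‖x‖ ^ 2 * ‖∇ (conjugate (phase τ) u) x‖ ^ 2))
        + 3 * (logRadial (weightSlope τ) x * ‖x‖ ^ 2 + logRadial (weightSlope τ) x ^ 3)
          * conjugate (phase τ) u x ^ 2 := by
  have hs : 0 < √‖x‖ := Real.sqrt_pos.mpr (norm_pos_iff.mpr hx)
  have hgrad := norm_sq_mul_norm_sq_gradient_le (hasDerivAt_phase hτ _) hu hx
  have hweight := gradient_weight_le hτ hs
  rw [Real.sq_sqrt (norm_nonneg x), ← logRadial_weightSlope τ hx] at hweight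
  have hW := exp_phase_sq_mul_weightSlope hτ hx
  have hw : conjugate (phase τ) u x = Real.exp (logRadial (phase τ) x) * u x := rfl
  set m := logRadial (weightSlope τ) x
  set p := shiftedPhaseDeriv τ (Real.log ‖x‖) - 1
  set w := conjugate (phase τ) u
  set e := Real.exp (logRadial (phase τ) x)
  have hp : p ^ 2 ≤ m ^ 2 := (slopeBounds_phase hm).sq_sub_one_le
  have hzeroth : Real.exp (4 * τ * (√‖x‖ - 1)) * rhoSqrt τ x ^ 2 * u x ^ 2
      = (m * ‖x‖ ^ 2 + m ^ 3 / 2) * w x ^ 2 := by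
    rw [← hW, hw]
    ring
  have hfirst : (√‖x‖ / (τ + √‖x‖)) ^ 2 * Real.exp (4 * τ * (√‖x‖ - 1)) * rhoSqrt τ x ^ 2
      * ‖∇ u x‖ ^ 2 ≤ m * (2 * (‖x‖ ^ 2 * ‖∇ w x‖ ^ 2) + 2 * (m ^ 2 * w x ^ 2)) := by
    calc _ = (√‖x‖ / (τ + √‖x‖)) ^ 2 * (m * ‖x‖ ^ 2 + m ^ 3 / 2) * (e ^ 2 * ‖∇ u x‖ ^ 2) := by
          rw [mul_assoc _ (Real.exp (4 * τ * (√‖x‖ - 1))), ← hW]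
          ring
      _ ≤ m * ‖x‖ ^ 2 * (e ^ 2 * ‖∇ u x‖ ^ 2) := by gcongr
      _ = m * (e ^ 2 * (‖x‖ ^ 2 * ‖∇ u x‖ ^ 2)) := by ring
      _ ≤ m * (2 * (‖x‖ ^ 2 * ‖∇ w x‖ ^ 2) + 2 * (p * w x) ^ 2) := by gcongr
      _ ≤ _ := by
          rw [mul_pow]
          gcongr
  have hnonneg : 0 ≤ m ^ 3 * w x ^ 2 + 4 * (m * ‖x‖ ^ 2 * w x ^ 2) := by positivity
  linarith

lemma sq_conjSymm_sub_conjSkew_conjugate_phase (hu : ContDiff ℝ 2 u) (h0 : u =ᶠ[𝓝 0] 0)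
    (hx : x ≠ 0) (hτ : 0 < τ) :
    (conjSymm (shiftedPhaseDeriv τ) V (conjugate (phase τ) u) x
        - conjSkew (shiftedPhaseDeriv τ) (conjugate (phase τ) u) x) ^ 2
      = Real.exp (4 * τ * (√‖x‖ - 1)) * (rhoSqrt τ x ^ 2)⁻¹ * (Δ u x + V x * u x) ^ 2 := by
  rw [conjSymm_sub_conjSkew_conjugate (hasDerivAt_phase hτ)
      ((contDiff_shiftedPhaseDeriv τ (n := 1)).differentiable one_ne_zero _) hu
      (contDiff_conjugate (contDiff_phase hτ) hu h0) hx,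
    ← exp_phase_sq_mul_norm_pow_four hτ hx]
  ring

lemma weighted_sq_add_gradient_le_divergence {δ K M c : ℝ} (hV : ContDiff ℝ 1 V)
    (hu : ContDiff ℝ 2 u) (h0 : u =ᶠ[𝓝 0] 0) (hx : 1 ≤ ‖x‖) (hK : 0 ≤ K) (hM : 0 ≤ M)
    (hτ : 2 + 8 * (2 * K + 4 * (n + 1) ^ 2) ≤ τ) (hc0 : 0 < c) (hc : c ≤ 1 / 8) (hcδ : c ≤ δ)
    (hVM : V x ≤ M) (hvirial : δ * ‖x‖ ^ 2 - K ≤ ‖x‖ ^ 2 * (2 * V x + fderiv ℝ V x x)) :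
    Real.exp (4 * τ * (√‖x‖ - 1)) * rhoSqrt τ x ^ 2 * u x ^ 2
        + (√‖x‖ / (τ + √‖x‖)) ^ 2 * Real.exp (4 * τ * (√‖x‖ - 1)) * rhoSqrt τ x ^ 2
          * ‖∇ u x‖ ^ 2
      ≤ (1 + (7 + 2 * n + 2 * M) / c) * (Real.exp (4 * τ * (√‖x‖ - 1)) * (rhoSqrt τ x ^ 2)⁻¹
            * (Δ u x + V x * u x) ^ 2
          - divergence (commutatorFlux (shiftedPhaseDeriv τ) V (conjugate (phase τ) u)) x)
        + 2 * divergence (virialFlux (weightSlope τ) (conjugate (phase τ) u)) x := by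
  have hx0 : x ≠ 0 := norm_pos_iff.mp (zero_lt_one.trans_le hx)
  have hK' : 0 ≤ 8 * (2 * K + 4 * ((n : ℝ) + 1) ^ 2) := by positivity
  have hτ0 : 0 < τ := by linarith
  have hm : τ ≤ logRadial (weightSlope τ) x := by
    rw [logRadial_weightSlope τ hx0]
    exact le_mul_of_one_le_right hτ0.le (Real.one_le_sqrt.mpr hx)
  have hm2 : 2 ≤ logRadial (weightSlope τ) x := by linarith
  have hlarge : 8 * (2 * K + 4 * ((n : ℝ) + 1) ^ 2) ≤ logRadial (weightSlope τ) x ^ 2 := by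
    nlinarith
  have hderiv : logRadial (deriv (weightSlope τ)) x = logRadial (weightSlope τ) x / 2 :=
    (hasDerivAt_weightSlope τ _).deriv
  rw [← sq_conjSymm_sub_conjSkew_conjugate_phase hu h0 hx0 hτ0]
  refine (weighted_sq_add_gradient_le (hu.differentiable two_ne_zero x) hx0 hτ0 hm2).trans ?_
  have hbound := gradient_le_divergence (contDiff_shiftedPhaseDeriv τ)
    (hasDerivAt_weightSlope τ _).differentiableAt hderiv hV
    (contDiff_conjugate (contDiff_phase hτ0) hu h0) hx0 (slopeBounds_phase hm2) hK hM
    (by rwa [finrank_euclideanSpace_fin]) hc0 hc hcδ hVM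
    (by rwa [real_inner_comm, inner_gradient_left])
  rwa [finrank_euclideanSpace_fin] at hbound

/-- The vector field whose divergence is the error term in the pointwise Carleman inequality with
constant `C`. -/
def carlemanField (C τ : ℝ) (V u : Euc n → ℝ) : Euc n → Euc n :=
  (2 : ℝ) • virialFlux (weightSlope τ) (conjugate (phase τ) u)
    - C • commutatorFlux (shiftedPhaseDeriv τ) V (conjugate (phase τ) u)

lemma carlemanField_eq_zero (C τ : ℝ) (V : Euc n → ℝ) (h : u =ᶠ[𝓝 x] 0) :
    carlemanField C τ V u x = 0 := by
  have hw : conjugate (phase τ) u =ᶠ[𝓝 x] 0 := h.mono fun y hy => by simp [conjugate, hy]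
  simp [carlemanField, commutatorFlux_eq_zero _ V hw, virialFlux_eq_zero _ hw.eq_of_nhds]

lemma contDiffAt_virialFlux_conjugate (hu : ContDiff ℝ 2 u) (h0 : u =ᶠ[𝓝 0] 0) (hτ : 0 < τ)
    (hx : x ≠ 0) :
    ContDiffAt ℝ 1 (virialFlux (weightSlope τ) (conjugate (phase τ) u)) x :=
  contDiffAt_virialFlux (contDiff_weightSlope τ) (contDiff_conjugate (contDiff_phase hτ) hu h0) hx

lemma contDiffAt_commutatorFlux_conjugate (hV : ContDiff ℝ 1 V) (hu : ContDiff ℝ 2 u)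
    (h0 : u =ᶠ[𝓝 0] 0) (hτ : 0 < τ) (hx : x ≠ 0) :
    ContDiffAt ℝ 1 (commutatorFlux (shiftedPhaseDeriv τ) V (conjugate (phase τ) u)) x :=
  contDiffAt_commutatorFlux (contDiff_shiftedPhaseDeriv τ) hV
    (contDiff_conjugate (contDiff_phase hτ) hu h0) hx

lemma contDiff_carlemanField (C : ℝ) (hV : ContDiff ℝ 1 V) (hu : ContDiff ℝ 2 u)
    (h0 : u =ᶠ[𝓝 0] 0) (hτ : 0 < τ) : ContDiff ℝ 1 (carlemanField C τ V u) :=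
  contDiff_of_eventuallyEq_zero
    (fun _ hx => ((contDiffAt_virialFlux_conjugate hu h0 hτ hx).const_smul (2 : ℝ)).sub
      ((contDiffAt_commutatorFlux_conjugate hV hu h0 hτ hx).const_smul C))
    (h0.eventuallyEq_nhds.mono fun _ hy => carlemanField_eq_zero C τ V hy)

lemma divergence_carlemanField (C : ℝ) (hV : ContDiff ℝ 1 V) (hu : ContDiff ℝ 2 u)
    (h0 : u =ᶠ[𝓝 0] 0) (hτ : 0 < τ) (hx : x ≠ 0) :
    divergence (carlemanField C τ V u) x
      = 2 * divergence (virialFlux (weightSlope τ) (conjugate (phase τ) u)) x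
        - C * divergence (commutatorFlux (shiftedPhaseDeriv τ) V (conjugate (phase τ) u)) x := by
  have hB := (contDiffAt_virialFlux_conjugate hu h0 hτ hx).differentiableAt one_ne_zero
  have hA := (contDiffAt_commutatorFlux_conjugate hV hu h0 hτ hx).differentiableAt one_ne_zero
  rw [carlemanField, divergence_sub (hB.const_smul _) (hA.const_smul _),
    divergence_const_smul _ hB, divergence_const_smul _ hA]

theorem exists_divergence_carleman {δ M : ℝ} (hV : ContDiff ℝ 1 V) (hM : 0 ≤ M)
    (hVM : ∀ x, V x ≤ M) (hδ : 0 < δ)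
    (hvirial : ∀ᶠ x in cocompact (Euc n), δ ≤ 2 * V x + fderiv ℝ V x x) :
    ∃ τbar : ℝ, 1 ≤ τbar ∧ ∃ C : ℝ, 0 < C ∧ ∀ τ, τbar ≤ τ → ∀ u : Euc n → ℝ,
      ContDiff ℝ 2 u → HasCompactSupport u → (∀ x, ‖x‖ ≤ 1 → u x = 0) →
      ∃ F : Euc n → Euc n, ContDiff ℝ 1 F ∧ HasCompactSupport F ∧ ∀ x,
        Real.exp (4 * τ * (√‖x‖ - 1)) * rhoSqrt τ x ^ 2 * u x ^ 2
            + (√‖x‖ / (τ + √‖x‖)) ^ 2 * Real.exp (4 * τ * (√‖x‖ - 1)) * rhoSqrt τ x ^ 2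
              * ‖∇ u x‖ ^ 2
          ≤ C * (Real.exp (4 * τ * (√‖x‖ - 1)) * (rhoSqrt τ x ^ 2)⁻¹
              * (Δ u x + V x * u x) ^ 2) + divergence F x := by
  have hcont : Continuous fun x => 2 * V x + fderiv ℝ V x x :=
    (continuous_const.mul hV.continuous).add
      ((hV.continuous_fderiv one_ne_zero).clm_apply continuous_id)
  obtain ⟨K, hK, hK'⟩ := exists_le_norm_sq_mul hcont hvirial
  have hτbar : 0 ≤ 8 * (2 * K + 4 * ((n : ℝ) + 1) ^ 2) := by positivity
  refine ⟨2 + 8 * (2 * K + 4 * (n + 1) ^ 2), by linarith,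
    1 + (7 + 2 * n + 2 * M) / min (1 / 8) δ, by positivity, fun τ hτ u hu huc hu0 => ?_⟩
  have hτ0 : 0 < τ := by linarith
  have hball : ∀ x : Euc n, ‖x‖ < 1 → u =ᶠ[𝓝 x] 0 := fun x hx => by
    filter_upwards [Metric.isOpen_ball.mem_nhds (mem_ball_zero_iff.mpr hx)] with y hy
    exact hu0 y (mem_ball_zero_iff.mp hy).le
  have h0 : u =ᶠ[𝓝 0] 0 := hball 0 (by simp)
  set C := 1 + (7 + 2 * n + 2 * M) / min (1 / 8) δ
  refine ⟨carlemanField C τ V u, contDiff_carlemanField C hV hu h0 hτ0,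
    hasCompactSupport_of_eventuallyEq_zero huc fun x h => carlemanField_eq_zero C τ V h,
    fun x => ?_⟩
  rcases lt_or_ge ‖x‖ 1 with hx | hx
  · have hux := hball x hx
    have hdiv : divergence (carlemanField C τ V u) x = 0 := by
      rw [divergence_congr (hux.eventuallyEq_nhds.mono fun _ hy => carlemanField_eq_zero C τ V hy)]
      simp [divergence]
    have hgrad : ∇ u x = 0 := hux.gradient_eq.trans (gradient_const x 0)
    rw [hdiv, hgrad, hux.eq_of_nhds, Pi.zero_apply, norm_zero, zero_pow two_ne_zero, mul_zero,
      mul_zero, add_zero, add_zero]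
    positivity
  · have hpointwise := weighted_sq_add_gradient_le_divergence hV hu h0 hx hK hM hτ
      (lt_min (by norm_num) hδ) (min_le_left _ _) (min_le_right _ _) (hVM x) (hK' x)
    rw [divergence_carlemanField C hV hu h0 hτ0 (norm_pos_iff.mp (zero_lt_one.trans_le hx))]
    linarith

end Pointwise

/-! ### Complex-valued functions -/

section Complex

open scoped Gradient Laplacian InnerProductSpace

lemma norm_sq_fderiv_le {E : Type*} [NormedAddCommGroup E] [InnerProductSpace ℝ E]
    [CompleteSpace E] {u : E → ℂ} {x : E} (hu : DifferentiableAt ℝ u x) :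
    ‖fderiv ℝ u x‖ ^ 2
      ≤ ‖∇ (fun y => (u y).re) x‖ ^ 2 + ‖∇ (fun y => (u y).im) x‖ ^ 2 := by
  have hre (v : E) : ⟪∇ (fun y => (u y).re) x, v⟫_ℝ = (fderiv ℝ u x v).re :=
    inner_gradient_left.trans <| congrArg (· v)
      (Complex.reCLM.hasFDerivAt.comp x hu.hasFDerivAt).fderiv
  have him (v : E) : ⟪∇ (fun y => (u y).im) x, v⟫_ℝ = (fderiv ℝ u x v).im :=
    inner_gradient_left.trans <| congrArg (· v)
      (Complex.imCLM.hasFDerivAt.comp x hu.hasFDerivAt).fderiv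
  have hcs (a v : E) : ⟪a, v⟫_ℝ ^ 2 ≤ ‖a‖ ^ 2 * ‖v‖ ^ 2 := by
    rw [← mul_pow, sq_le_sq, abs_of_nonneg (by positivity : 0 ≤ ‖a‖ * ‖v‖)]
    exact abs_real_inner_le_norm a v
  refine (pow_le_pow_left₀ (norm_nonneg _) (ContinuousLinearMap.opNorm_le_bound _
    (Real.sqrt_nonneg _) fun v => ?_) 2).trans_eq (Real.sq_sqrt (by positivity))
  refine le_of_sq_le_sq ?_ (by positivity)
  rw [mul_pow, Real.sq_sqrt (by positivity), Complex.sq_norm, Complex.normSq_apply, ← sq, ← sq,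
    ← hre, ← him, add_mul]
  exact add_le_add (hcs _ v) (hcs _ v)

variable {n : ℕ} {u : Euc n → ℂ}

lemma contDiff_pd {k : ℕ} (i : Fin n) (hu : ContDiff ℝ (k + 1) u) : ContDiff ℝ k (pd i u) :=
  (hu.fderiv_right le_rfl).clm_apply contDiff_const

lemma lap_eq_laplacian (hu : ContDiff ℝ 2 u) (x : Euc n) : lap u x = Δ u x := by
  rw [InnerProductSpace.laplacian_eq_iteratedFDeriv_orthonormalBasis u
    (EuclideanSpace.basisFun (Fin n) ℝ)]
  refine Finset.sum_congr rfl fun i _ => ?_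
  rw [iteratedFDeriv_two_apply, EuclideanSpace.basisFun_apply]
  have hd : DifferentiableAt ℝ (fderiv ℝ u) x :=
    (hu.fderiv_right (m := 1) le_rfl).differentiable one_ne_zero x
  change fderiv ℝ (fun y => fderiv ℝ u y _) x _ = _
  rw [fderiv_clm_apply hd (differentiableAt_const _)]
  simp

lemma continuous_lap (hu : ContDiff ℝ 2 u) : Continuous (lap u) :=
  continuous_finsetSum _ fun i _ => (contDiff_pd (k := 0) i (contDiff_pd (k := 1) i hu)).continuous

lemma norm_sq_lap_add_mul (hu : ContDiff ℝ 2 u) (x : Euc n) (c : ℝ) :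
    ‖lap u x + c * u x‖ ^ 2 = (Δ (fun y => (u y).re) x + c * (u x).re) ^ 2
      + (Δ (fun y => (u y).im) x + c * (u x).im) ^ 2 := by
  have hre : Δ (fun y => (u y).re) x = (Δ u x).re :=
    hu.contDiffAt.laplacian_CLM_comp_left (l := Complex.reCLM)
  have him : Δ (fun y => (u y).im) x = (Δ u x).im :=
    hu.contDiffAt.laplacian_CLM_comp_left (l := Complex.imCLM)
  rw [lap_eq_laplacian hu, Complex.sq_norm, Complex.normSq_apply, hre, him]
  simp [sq]

end Complex

section Integration

variable {α : Type*} [MeasurableSpace α] {μ : Measure α} {f g h Z : α → ℝ} {C : ℝ}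

lemma lintegral_add_lintegral_le_of_integral_eq_zero (hC : 0 < C) (hf : AEMeasurable f μ)
    (hh : AEStronglyMeasurable h μ) (hf0 : 0 ≤ f) (hg0 : 0 ≤ g) (hh0 : 0 ≤ h)
    (hZ : Integrable Z μ) (hZ0 : ∫ x, Z x ∂μ = 0) (hle : ∀ x, f x + g x ≤ C * h x + Z x) :
    (∫⁻ x, ENNReal.ofReal (f x) ∂μ) + ∫⁻ x, ENNReal.ofReal (g x) ∂μ
      ≤ ENNReal.ofReal C * ∫⁻ x, ENNReal.ofReal (h x) ∂μ := by
  rcases eq_or_ne (∫⁻ x, ENNReal.ofReal (h x) ∂μ) ⊤ with htop | hfin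
  · rw [htop, ENNReal.mul_top (ENNReal.ofReal_pos.mpr hC).ne']
    exact le_top
  have hint : Integrable h μ := ⟨hh, by
    rwa [hasFiniteIntegral_iff_ofReal (ae_of_all _ hh0), lt_top_iff_ne_top]⟩
  have hint' : Integrable (fun x => C * h x + Z x) μ := (hint.const_mul C).add hZ
  rw [← lintegral_add_left' hf.ennreal_ofReal]
  calc ∫⁻ x, (ENNReal.ofReal (f x) + ENNReal.ofReal (g x)) ∂μ
      ≤ ∫⁻ x, ENNReal.ofReal (C * h x + Z x) ∂μ := lintegral_mono fun x => by
        rw [← ENNReal.ofReal_add (hf0 x) (hg0 x)]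
        exact ENNReal.ofReal_le_ofReal (hle x)
    _ = ENNReal.ofReal (∫ x, (C * h x + Z x) ∂μ) :=
        (ofReal_integral_eq_lintegral_ofReal hint'
          (ae_of_all _ fun x => (add_nonneg (hf0 x) (hg0 x)).trans (hle x))).symm
    _ = ENNReal.ofReal (C * ∫ x, h x ∂μ) := by
        rw [integral_add (hint.const_mul C) hZ, hZ0, add_zero, integral_const_mul]
    _ = ENNReal.ofReal C * ∫⁻ x, ENNReal.ofReal (h x) ∂μ := by
        rw [ENNReal.ofReal_mul hC.le, ofReal_integral_eq_lintegral_ofReal hint (ae_of_all _ hh0)]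

end Integration

section Carleman

variable {n : ℕ} {V : Euc n → ℝ} {δ M : ℝ}

lemma measurable_rhoSqrt (τ : ℝ) : Measurable (rhoSqrt τ : Euc n → ℝ) := by
  unfold rhoSqrt
  fun_prop

theorem exists_integral_eq_zero_carleman (hV : ContDiff ℝ 1 V) (hVM : ∀ x, V x ≤ M) (hδ : 0 < δ)
    (hvirial : ∀ᶠ x in cocompact (Euc n), δ ≤ 2 * V x + fderiv ℝ V x x) :
    ∃ τbar : ℝ, 1 ≤ τbar ∧ ∃ C : ℝ, 0 < C ∧ ∀ τ, τbar ≤ τ → ∀ u : Euc n → ℂ,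
      ContDiff ℝ 2 u → HasCompactSupport u → (∀ x, ‖x‖ ≤ 1 → u x = 0) →
      ∃ Z : Euc n → ℝ, Integrable Z ∧ ∫ x, Z x = 0 ∧ ∀ x,
        Real.exp (4 * τ * (√‖x‖ - 1)) * rhoSqrt τ x ^ 2 * ‖u x‖ ^ 2
            + (√‖x‖ / (τ + √‖x‖)) ^ 2 * Real.exp (4 * τ * (√‖x‖ - 1)) * rhoSqrt τ x ^ 2
              * ‖fderiv ℝ u x‖ ^ 2
          ≤ C * (Real.exp (4 * τ * (√‖x‖ - 1)) * (rhoSqrt τ x ^ 2)⁻¹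
              * ‖lap u x + V x * u x‖ ^ 2) + Z x := by
  obtain ⟨τbar, hτbar, C, hC, hreal⟩ := exists_divergence_carleman hV (le_max_right M 0)
    (fun x => (hVM x).trans (le_max_left M 0)) hδ hvirial
  refine ⟨τbar, hτbar, C, hC, fun τ hτ u hu huc hu0 => ?_⟩
  obtain ⟨F, hF, hFc, hFle⟩ := hreal τ hτ (fun x => (u x).re) (Complex.reCLM.contDiff.comp hu)
    (huc.comp_left Complex.zero_re) fun x hx => by rw [hu0 x hx, Complex.zero_re]
  obtain ⟨G, hG, hGc, hGle⟩ := hreal τ hτ (fun x => (u x).im) (Complex.imCLM.contDiff.comp hu)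
    (huc.comp_left Complex.zero_im) fun x hx => by rw [hu0 x hx, Complex.zero_im]
  have hFint := integrable_divergence volume hF hFc
  have hGint := integrable_divergence volume hG hGc
  refine ⟨fun x => divergence F x + divergence G x, hFint.add hGint, ?_, fun x => ?_⟩
  · rw [integral_add hFint hGint, integral_divergence_eq_zero volume hF hFc,
      integral_divergence_eq_zero volume hG hGc, add_zero]
  · have hgrad := mul_le_mul_of_nonneg_left
      (norm_sq_fderiv_le (hu.differentiable two_ne_zero x))
      (by positivity : 0 ≤ (√‖x‖ / (τ + √‖x‖)) ^ 2 * Real.exp (4 * τ * (√‖x‖ - 1))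
        * rhoSqrt τ x ^ 2)
    rw [norm_sq_lap_add_mul hu, Complex.sq_norm (u x), Complex.normSq_apply]
    linarith [hFle x, hGle x]

theorem L2_carleman_estimate_sqrt_weight_general (hV : ContDiff ℝ 1 V) (hVM : ∀ x, V x ≤ M)
    (hδ : 0 < δ) (hvirial : ∀ᶠ x in cocompact (Euc n), δ ≤ 2 * V x + fderiv ℝ V x x) :
    ∃ τbar : ℝ, 1 ≤ τbar ∧ ∃ C : ℝ, 0 < C ∧ ∀ τ, τbar ≤ τ → ∀ u : Euc n → ℂ,
      ContDiff ℝ 2 u → HasCompactSupport u → (∀ x, ‖x‖ ≤ 1 → u x = 0) →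
      (∫⁻ x : Euc n, ENNReal.ofReal
          (Real.exp (4 * τ * (√‖x‖ - 1)) * rhoSqrt τ x ^ 2 * ‖u x‖ ^ 2))
        + (∫⁻ x : Euc n, ENNReal.ofReal ((√‖x‖ / (τ + √‖x‖)) ^ 2
            * Real.exp (4 * τ * (√‖x‖ - 1)) * rhoSqrt τ x ^ 2 * ‖fderiv ℝ u x‖ ^ 2))
        ≤ ENNReal.ofReal C * ∫⁻ x : Euc n, ENNReal.ofReal
            (Real.exp (4 * τ * (√‖x‖ - 1)) * (rhoSqrt τ x ^ 2)⁻¹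
              * ‖lap u x + (V x : ℂ) * u x‖ ^ 2) := by
  obtain ⟨τbar, hτbar, C, hC, hpointwise⟩ := exists_integral_eq_zero_carleman hV hVM hδ hvirial
  refine ⟨τbar, hτbar, C, hC, fun τ hτ u hu huc hu0 => ?_⟩
  obtain ⟨Z, hZ, hZ0, hle⟩ := hpointwise τ hτ u hu huc hu0
  have hexp : Measurable fun x : Euc n => Real.exp (4 * τ * (√‖x‖ - 1)) := by fun_prop
  have hρ : Measurable fun x : Euc n => rhoSqrt τ x ^ 2 := (measurable_rhoSqrt τ).pow_const 2
  have hPu : Continuous fun x => lap u x + (V x : ℂ) * u x :=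
    (continuous_lap hu).add ((Complex.continuous_ofReal.comp hV.continuous).mul hu.continuous)
  exact lintegral_add_lintegral_le_of_integral_eq_zero hC
    ((hexp.mul hρ).mul (hu.continuous.norm.pow 2).measurable).aemeasurable
    ((hexp.mul hρ.inv).mul (hPu.norm.pow 2).measurable).aestronglyMeasurable
    (fun x => by positivity) (fun x => by positivity) (fun x => by positivity) hZ hZ0 hle

end Carleman

/-- The `L²` Carleman estimate with the weight `e^{τ√|x|}` (the `ε → 0`
endpoint of the family of the paper's weights). -/
theorem L2_carleman_estimate_sqrt_weight
    (n : ℕ) (hn : 2 ≤ n) (V : Euc n → ℝ) (τ0 : ℝ)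
    (hV : SatA1 V τ0) (hτ0 : τ0 < 1 / 2) :
    ∃ τbar : ℝ, 1 ≤ τbar ∧
      ∃ C : ℝ, 0 < C ∧
        ∀ τ : ℝ, τbar ≤ τ →
          ∀ u : Euc n → ℂ, ContDiff ℝ (⊤ : ℕ∞) u → HasCompactSupport u →
            (∀ x : Euc n, ‖x‖ ≤ 1 → u x = 0) →
            (∫⁻ x : Euc n, ENNReal.ofReal
                (Real.exp (4 * τ * (Real.sqrt ‖x‖ - 1))
                  * rhoSqrt τ x ^ 2 * ‖u x‖ ^ 2))
            + (∫⁻ x : Euc n, ENNReal.ofReal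
                ((Real.sqrt ‖x‖ / (τ + Real.sqrt ‖x‖)) ^ 2
                  * Real.exp (4 * τ * (Real.sqrt ‖x‖ - 1))
                  * rhoSqrt τ x ^ 2 * ‖fderiv ℝ u x‖ ^ 2))
            ≤ ENNReal.ofReal C * ∫⁻ x : Euc n, ENNReal.ofReal
                (Real.exp (4 * τ * (Real.sqrt ‖x‖ - 1))
                  * (rhoSqrt τ x ^ 2)⁻¹
                  * ‖lap u x + (V x : ℂ) * u x‖ ^ 2) := by
  obtain ⟨δ, hδ, hvirial⟩ := hV.eventually_le_virial hτ0
  obtain ⟨hVdiff, ⟨M, hM⟩, -⟩ := hV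
  obtain ⟨τbar, hτbar, C, hC, hestimate⟩ := L2_carleman_estimate_sqrt_weight_general
    (hVdiff.of_le one_le_two) (fun x => (le_abs_self _).trans (hM x).1) hδ hvirial
  exact ⟨τbar, hτbar, C, hC, fun τ hτ u hu => hestimate τ hτ u (hu.of_le (by norm_cast))⟩
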